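/- Let T be a tree with at least 3 vertices and leaves as boundary B. Then 0 = σ_1(T) < σ_2(T) ≤ ⋯ ≤ σ_{|B|}(T) ≤ 1; in particular every Steklov eigenvalue of T is at most 1 and the eigenvalue 0 has multiplicity exactly 1. -/

import Mathlib

open scoped BigOperators
open Classical

/-- The Dirichlet energy of a function on a finite graph: `∑_{edges xy} (f x - f y)^2`. -/
noncomputable def dirichletEnergy {V : Type*} [Fintype V] (G : SimpleGraph V) (f : V → ℝ) : ℝ :=
  (∑ x : V, ∑ y : V, if G.Adj x y then (f x - f y) ^ 2 else 0) / 2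

/-- The `k`-th Steklov (Dirichlet-to-Neumann) eigenvalue (1-indexed, in increasing order
with multiplicity) of a finite graph `G` with boundary `B`, via the variational
(Courant–Fischer) characterization. -/
noncomputable def steklovEig {V : Type*} [Fintype V] (G : SimpleGraph V) (B : Finset V)
    (k : ℕ) : ℝ :=
  sInf { t : ℝ | ∃ F : Submodule ℝ (V → ℝ),
    Module.finrank ℝ (F.map (LinearMap.funLeft ℝ ℝ (fun x : {v // v ∈ B} => (x : V)))) = k ∧
    ∀ f ∈ F, dirichletEnergy G f ≤ t * ∑ x ∈ B, (f x) ^ 2 }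

/-- The set of leaves (vertices of degree 1) of a finite graph, as a `Finset`. -/
noncomputable def leavesFinset {V : Type*} [Fintype V] (G : SimpleGraph V) : Finset V :=
  Finset.univ.filter fun v => G.degree v = 1

/-- `σ_{k,max}(b,n)`: the maximum of the `k`-th Steklov eigenvalue over all trees with
`b` leaves (as boundary) and `n` vertices. -/
noncomputable def sigmaMax (k b n : ℕ) : ℝ :=
  sSup { s : ℝ | ∃ G : SimpleGraph (Fin n), G.IsTree ∧ (leavesFinset G).card = b ∧
    s = steklovEig G (leavesFinset G) k }

/-- `σ̃_{2,max}(D,n)`: the maximum of the first nontrivial Steklov eigenvalue over all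
trees with diameter `D` and `n` vertices. -/
noncomputable def sigmaTildeMax (D n : ℕ) : ℝ :=
  sSup { s : ℝ | ∃ G : SimpleGraph (Fin n), G.IsTree ∧ G.diam = D ∧
    s = steklovEig G (leavesFinset G) 2 }

/-!
The admissible constants in the variational characterization of `σ_k` shrink as `k` grows, which
gives monotonicity. In a two-dimensional space of boundary data some nonzero function vanishes at a
given boundary vertex `b`; on such functions the energy controls the boundary `ℓ²`-norm, because
differences along a geodesic to `b` are controlled by the energy, so `σ_2 > 0`. Conversely, extend
boundary data by zero: if no two boundary vertices are adjacent, every edge carries the square of at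
most one boundary value, so the energy is `∑ x ∈ B, deg x * f x ^ 2`. In a tree with at least three
vertices the leaves are pairwise nonadjacent and have degree one, whence the bound `1`.
-/

section Energy

variable {V : Type*} [Fintype V] (G : SimpleGraph V) (f : V → ℝ)

lemma dirichletEnergy_nonneg : 0 ≤ dirichletEnergy G f :=
  div_nonneg (Finset.sum_nonneg fun _ _ => Finset.sum_nonneg fun _ _ => by
    split_ifs <;> positivity) zero_le_two

lemma dirichletEnergy_const (c : ℝ) : dirichletEnergy G (fun _ => c) = 0 := by
  simp [dirichletEnergy]

lemma sum_sum_adj_add (g : V → ℝ) :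
    (∑ x, ∑ y, if G.Adj x y then g x + g y else 0) = 2 * ∑ x, G.degree x * g x := by
  have hleft : (∑ x, ∑ y, if G.Adj x y then g x else 0) = ∑ x, G.degree x * g x :=
    Finset.sum_congr rfl fun x _ => by
      rw [← Finset.sum_filter, Finset.sum_const, ← SimpleGraph.neighborFinset_eq_filter,
        SimpleGraph.card_neighborFinset_eq_degree, nsmul_eq_mul]
  have hright : (∑ x, ∑ y, if G.Adj x y then g y else 0) = ∑ x, G.degree x * g x := by
    rw [Finset.sum_comm, ← hleft]
    simp only [G.adj_comm]
  simp only [ite_add_zero, Finset.sum_add_distrib, hleft, hright, two_mul]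

lemma dirichletEnergy_le_two_mul_sum_degree :
    dirichletEnergy G f ≤ 2 * ∑ x, G.degree x * f x ^ 2 := by
  calc dirichletEnergy G f
      ≤ (∑ x, ∑ y, if G.Adj x y then 2 * f x ^ 2 + 2 * f y ^ 2 else 0) / 2 := by
        unfold dirichletEnergy
        gcongr with x _ y _
        split_ifs
        · linarith [sq_nonneg (f x + f y)]
        · exact le_rfl
    _ = ∑ x, G.degree x * (2 * f x ^ 2) := by
        rw [sum_sum_adj_add G fun x => 2 * f x ^ 2, mul_div_cancel_left₀ _ two_ne_zero]
    _ = 2 * ∑ x, G.degree x * f x ^ 2 := by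
        simp only [Finset.mul_sum, mul_left_comm]

variable {G}

lemma sq_sub_le_dirichletEnergy {x y : V} (h : G.Adj x y) :
    (f x - f y) ^ 2 ≤ dirichletEnergy G f := by
  let e : V × V → ℝ := fun p => if G.Adj p.1 p.2 then (f p.1 - f p.2) ^ 2 else 0
  have he : ∀ p, 0 ≤ e p := fun p => by dsimp only [e]; split_ifs <;> positivity
  have hne : (x, y) ≠ (y, x) := fun hxy => h.ne (congrArg Prod.fst hxy)
  have hle : e (x, y) + e (y, x) ≤ ∑ p, e p := by
    simpa only [Finset.sum_pair hne] using
      Finset.sum_le_univ_sum_of_nonneg (s := {(x, y), (y, x)}) he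
  have hsum : ∑ p, e p = 2 * dirichletEnergy G f := by
    rw [Fintype.sum_prod_type, dirichletEnergy, mul_div_cancel₀ _ two_ne_zero]
  simp only [e, h, h.symm, if_true] at hle hsum
  linarith [sub_sq_comm (f x) (f y)]

lemma abs_sub_le_length_mul_sqrt_dirichletEnergy {x y : V} (p : G.Walk x y) :
    |f x - f y| ≤ p.length * √(dirichletEnergy G f) := by
  induction p with
  | nil => simp
  | @cons u v w h p ih =>
    calc |f u - f w| ≤ |f u - f v| + |f v - f w| := abs_sub_le _ _ _
      _ ≤ √(dirichletEnergy G f) + p.length * √(dirichletEnergy G f) :=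
        add_le_add (Real.abs_le_sqrt (sq_sub_le_dirichletEnergy f h)) ih
      _ = (p.cons h).length * √(dirichletEnergy G f) := by
        rw [SimpleGraph.Walk.length_cons]; push_cast; ring

lemma sq_sub_le_dist_sq_mul_dirichletEnergy {x y : V} (h : G.Reachable x y) :
    (f x - f y) ^ 2 ≤ (G.dist x y : ℝ) ^ 2 * dirichletEnergy G f := by
  obtain ⟨p, hp⟩ := h.exists_walk_length_eq_dist
  have hle := abs_sub_le_length_mul_sqrt_dirichletEnergy f p
  calc (f x - f y) ^ 2 ≤ (p.length * √(dirichletEnergy G f)) ^ 2 :=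
        sq_le_sq.2 (hle.trans (le_abs_self _))
    _ = (G.dist x y : ℝ) ^ 2 * dirichletEnergy G f := by
        rw [mul_pow, Real.sq_sqrt (dirichletEnergy_nonneg G f), hp]

variable {f}

lemma sum_sq_le_sum_dist_sq_mul_dirichletEnergy (hG : G.Connected) (B : Finset V) {b : V}
    (hb : f b = 0) :
    ∑ x ∈ B, f x ^ 2 ≤ (∑ x ∈ B, (G.dist x b : ℝ) ^ 2) * dirichletEnergy G f := by
  rw [Finset.sum_mul]
  exact Finset.sum_le_sum fun x _ => by
    simpa only [hb, sub_zero] using sq_sub_le_dist_sq_mul_dirichletEnergy f (hG x b)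

lemma dirichletEnergy_eq_sum_degree (h : ∀ x y, G.Adj x y → f x * f y = 0) :
    dirichletEnergy G f = ∑ x, G.degree x * f x ^ 2 := by
  have hsq : ∀ x y, (if G.Adj x y then (f x - f y) ^ 2 else 0) =
      if G.Adj x y then f x ^ 2 + f y ^ 2 else 0 := fun x y =>
    if_ctx_congr Iff.rfl (fun hxy => by linear_combination -2 * h x y hxy) fun _ => rfl
  simp only [dirichletEnergy, hsq]
  rw [sum_sum_adj_add G fun x => f x ^ 2, mul_div_cancel_left₀ _ two_ne_zero]

end Energy

lemma exists_le_finrank_map_eq {K M N : Type*} [Ring K] [StrongRankCondition K] [AddCommGroup M]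
    [Module K M] [AddCommGroup N] [Module K N] (φ : M →ₗ[K] N) (F : Submodule K M) {k : ℕ}
    (hk : k ≤ Module.finrank K (F.map φ)) :
    ∃ F' ≤ F, Module.finrank K (F'.map φ) = k := by
  obtain ⟨w, hw⟩ := exists_linearIndependent_of_le_finrank hk
  choose g hgF hgw using fun i => (w i).2
  have hφg : LinearIndependent K (φ ∘ g) := by
    simpa only [Function.comp_def, hgw, Submodule.subtype_apply] using
      hw.map' (F.map φ).subtype (Submodule.ker_subtype _)
  have := nontrivial_of_invariantBasisNumber K
  refine ⟨Submodule.span K (Set.range g), Submodule.span_le.2 (Set.range_subset_iff.2 hgF), ?_⟩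
  rw [Submodule.map_span, ← Set.range_comp, finrank_span_eq_card hφg, Fintype.card_fin]

section Steklov

variable {V : Type*}

/-- The restriction of functions on the vertex set to the boundary `B`; the dimension constraint in
the variational characterization of `steklovEig` is imposed on images under this map. -/
def boundaryRestriction (B : Finset V) : (V → ℝ) →ₗ[ℝ] ({v // v ∈ B} → ℝ) :=
  LinearMap.funLeft ℝ ℝ fun x : {v // v ∈ B} => (x : V)

lemma sum_sq_pos_of_boundaryRestriction_ne_zero {B : Finset V} {f : V → ℝ}
    (h : boundaryRestriction B f ≠ 0) : 0 < ∑ x ∈ B, f x ^ 2 := by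
  obtain ⟨x, hx⟩ := Function.ne_iff.1 h
  exact Finset.sum_pos' (fun _ _ => sq_nonneg _) ⟨x, x.2, sq_pos_of_ne_zero hx⟩

lemma sum_dist_sq_pos {G : SimpleGraph V} (hG : G.Connected) {B : Finset V}
    (hB : B.Nontrivial) (b : V) : 0 < ∑ x ∈ B, (G.dist x b : ℝ) ^ 2 := by
  obtain ⟨x, hx, hxb⟩ := hB.exists_ne b
  have hdist : 0 < (G.dist x b : ℝ) := Nat.cast_pos.2 (hG.pos_dist_of_ne hxb)
  exact Finset.sum_pos' (fun _ _ => sq_nonneg _) ⟨x, hx, pow_pos hdist 2⟩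

variable [Fintype V]

/-- The constants admissible in the variational characterization of the `k`-th Steklov eigenvalue:
`t` is admissible if the energy is at most `t` times the boundary `ℓ²`-norm squared on a space of
functions whose boundary values span `k` dimensions. Their infimum is `steklovEig G B k`. -/
def steklovBounds (G : SimpleGraph V) (B : Finset V) (k : ℕ) : Set ℝ :=
  {t | ∃ F : Submodule ℝ (V → ℝ), Module.finrank ℝ (F.map (boundaryRestriction B)) = k ∧
    ∀ f ∈ F, dirichletEnergy G f ≤ t * ∑ x ∈ B, f x ^ 2}

variable {G : SimpleGraph V} {B : Finset V} {k l : ℕ} {t : ℝ}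

lemma steklovBounds_antitone : Antitone (steklovBounds G B) := by
  rintro k l hkl t ⟨F, hF, hE⟩
  obtain ⟨F', hF', hk⟩ := exists_le_finrank_map_eq (boundaryRestriction B) F (hkl.trans_eq hF.symm)
  exact ⟨F', hk, fun f hf => hE f (hF' hf)⟩

lemma nonneg_of_mem_steklovBounds (hk : 1 ≤ k) (ht : t ∈ steklovBounds G B k) : 0 ≤ t := by
  obtain ⟨F, hF, hE⟩ := ht
  obtain ⟨⟨_, f, hf, rfl⟩, hne⟩ := Module.finrank_pos_iff_exists_ne_zero.1 (hk.trans_eq hF.symm)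
  have hpos := sum_sq_pos_of_boundaryRestriction_ne_zero fun h0 => hne (Subtype.ext h0)
  exact nonneg_of_mul_nonneg_left ((dirichletEnergy_nonneg G f).trans (hE f hf)) hpos

lemma bddBelow_steklovBounds (hk : 1 ≤ k) : BddBelow (steklovBounds G B k) :=
  ⟨0, fun _ => nonneg_of_mem_steklovBounds hk⟩

lemma zero_mem_steklovBounds_one (hB : B.Nonempty) : 0 ∈ steklovBounds G B 1 := by
  obtain ⟨b, hb⟩ := hB
  refine ⟨Submodule.span ℝ {fun _ => 1}, ?_, fun f hf => ?_⟩
  · rw [Submodule.map_span, Set.image_singleton]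
    exact finrank_span_singleton fun h => one_ne_zero (congrFun h ⟨b, hb⟩)
  · obtain ⟨c, rfl⟩ := Submodule.mem_span_singleton.1 hf
    exact (dirichletEnergy_const G (c * 1)).trans_le (zero_mul _).ge

lemma one_le_sum_dist_sq_mul_of_mem_steklovBounds_two (hG : G.Connected) {b : V} (hb : b ∈ B)
    (ht : t ∈ steklovBounds G B 2) : 1 ≤ (∑ x ∈ B, (G.dist x b : ℝ) ^ 2) * t := by
  obtain ⟨F, hF, hE⟩ := ht
  let evalAtB : F.map (boundaryRestriction B) →ₗ[ℝ] ℝ :=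
    LinearMap.proj ⟨b, hb⟩ ∘ₗ (F.map (boundaryRestriction B)).subtype
  have hker : LinearMap.ker evalAtB ≠ ⊥ := LinearMap.ker_ne_bot_of_finrank_lt <| by
    rw [hF, Module.finrank_self]; exact one_lt_two
  obtain ⟨⟨_, f, hf, rfl⟩, hfb, hne⟩ := Submodule.exists_mem_ne_zero_of_ne_bot hker
  have hpos := sum_sq_pos_of_boundaryRestriction_ne_zero fun h0 => hne (Subtype.ext h0)
  refine le_of_mul_le_mul_right ?_ hpos
  calc 1 * ∑ x ∈ B, f x ^ 2 = ∑ x ∈ B, f x ^ 2 := one_mul _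
    _ ≤ (∑ x ∈ B, (G.dist x b : ℝ) ^ 2) * dirichletEnergy G f :=
      sum_sq_le_sum_dist_sq_mul_dirichletEnergy hG B hfb
    _ ≤ (∑ x ∈ B, (G.dist x b : ℝ) ^ 2) * (t * ∑ x ∈ B, f x ^ 2) := by gcongr; exact hE f hf
    _ = (∑ x ∈ B, (G.dist x b : ℝ) ^ 2) * t * ∑ x ∈ B, f x ^ 2 := (mul_assoc _ _ _).symm

lemma mem_steklovBounds_of_forall_eq_zero
    (h : ∀ f : V → ℝ, (∀ x ∉ B, f x = 0) → dirichletEnergy G f ≤ t * ∑ x ∈ B, f x ^ 2)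
    (hk : k ≤ B.card) : t ∈ steklovBounds G B k := by
  let extendByZero := Function.ExtendByZero.linearMap ℝ (Subtype.val : {v // v ∈ B} → V)
  have hres : boundaryRestriction B ∘ₗ extendByZero = LinearMap.id :=
    LinearMap.ext fun g => funext (Subtype.val_injective.extend_apply g (0 : V → ℝ))
  refine steklovBounds_antitone hk ⟨LinearMap.range extendByZero, ?_, ?_⟩
  · rw [← LinearMap.range_comp, hres, LinearMap.range_id, finrank_top,
      Module.finrank_fintype_fun_eq_card, Fintype.card_coe]
  · rintro _ ⟨g, rfl⟩
    exact h _ fun x hx => Function.extend_apply' g (0 : V → ℝ) x fun ⟨y, hy⟩ => hx (hy ▸ y.2)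

lemma sum_degree_mul_sq_le {f : V → ℝ} {d : ℕ} (hf : ∀ x ∉ B, f x = 0)
    (hd : ∀ x ∈ B, G.degree x ≤ d) : ∑ x, G.degree x * f x ^ 2 ≤ d * ∑ x ∈ B, f x ^ 2 := by
  have hoff : ∀ x ∈ Finset.univ, x ∉ B → (G.degree x : ℝ) * f x ^ 2 = 0 := fun x _ hx => by
    rw [hf x hx, zero_pow two_ne_zero, mul_zero]
  rw [← Finset.sum_subset B.subset_univ hoff, Finset.mul_sum]
  gcongr with x hx
  exact hd x hx

lemma steklovBounds_nonempty (hk : k ≤ B.card) : (steklovBounds G B k).Nonempty := by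
  refine ⟨2 * G.maxDegree, mem_steklovBounds_of_forall_eq_zero (fun f hf => ?_) hk⟩
  have hdeg := sum_degree_mul_sq_le hf fun x _ => G.degree_le_maxDegree x
  linarith [dirichletEnergy_le_two_mul_sum_degree G f]

lemma natCast_mem_steklovBounds {d : ℕ} (hB : G.IsIndepSet B) (hd : ∀ x ∈ B, G.degree x ≤ d)
    (hk : k ≤ B.card) : (d : ℝ) ∈ steklovBounds G B k := by
  refine mem_steklovBounds_of_forall_eq_zero (fun f hf => ?_) hk
  have hadj : ∀ x y, G.Adj x y → f x * f y = 0 := fun x y hxy => by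
    by_cases hx : x ∈ B
    · rw [hf y fun hy => hB hx hy hxy.ne hxy, mul_zero]
    · rw [hf x hx, zero_mul]
  exact (dirichletEnergy_eq_sum_degree hadj).trans_le (sum_degree_mul_sq_le hf hd)

lemma steklovEig_one (hB : B.Nonempty) : steklovEig G B 1 = 0 :=
  le_antisymm (csInf_le (bddBelow_steklovBounds le_rfl) (zero_mem_steklovBounds_one hB))
    (Real.sInf_nonneg fun _ => nonneg_of_mem_steklovBounds le_rfl)

lemma inv_sum_dist_sq_le_steklovEig_two (hG : G.Connected) (hB : B.Nontrivial) {b : V}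
    (hb : b ∈ B) : (∑ x ∈ B, (G.dist x b : ℝ) ^ 2)⁻¹ ≤ steklovEig G B 2 := by
  refine le_csInf (steklovBounds_nonempty (Finset.one_lt_card_iff_nontrivial.2 hB)) fun t ht => ?_
  exact (inv_le_iff_one_le_mul₀' (sum_dist_sq_pos hG hB b)).2
    (one_le_sum_dist_sq_mul_of_mem_steklovBounds_two hG hb ht)

lemma steklovEig_two_pos (hG : G.Connected) (hB : B.Nontrivial) : 0 < steklovEig G B 2 := by
  obtain ⟨b, hb⟩ := hB.nonempty
  exact (inv_pos.2 (sum_dist_sq_pos hG hB b)).trans_le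
    (inv_sum_dist_sq_le_steklovEig_two hG hB hb)

lemma steklovEig_mono (hk : 1 ≤ k) (hkl : k ≤ l) (hl : l ≤ B.card) :
    steklovEig G B k ≤ steklovEig G B l :=
  csInf_le_csInf (bddBelow_steklovBounds hk) (steklovBounds_nonempty hl)
    (steklovBounds_antitone hkl)

lemma steklovEig_le_of_degree_le {d : ℕ} (hB : G.IsIndepSet B) (hd : ∀ x ∈ B, G.degree x ≤ d)
    (hk : 1 ≤ k) (hkB : k ≤ B.card) : steklovEig G B k ≤ d :=
  csInf_le (bddBelow_steklovBounds hk) (natCast_mem_steklovBounds hB hd hkB)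

end Steklov

section Leaves

variable {V : Type*} [Fintype V] {G : SimpleGraph V}

lemma mem_leavesFinset {v : V} : v ∈ leavesFinset G ↔ G.degree v = 1 := by
  simp only [leavesFinset, Finset.mem_filter_univ]

lemma leavesFinset_nontrivial [Nontrivial V] (hG : G.IsTree) : (leavesFinset G).Nontrivial := by
  obtain ⟨u, v, huv, hu, hv⟩ := hG.exists_ne_and_degree_eq_one
  exact ⟨u, mem_leavesFinset.2 hu, v, mem_leavesFinset.2 hv, huv⟩

lemma isIndepSet_leavesFinset (hG : G.Connected) (hV : 2 < Fintype.card V) :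
    G.IsIndepSet (leavesFinset G) := by
  intro u hu v hv _ huv
  simp only [Finset.mem_coe, mem_leavesFinset, SimpleGraph.degree_eq_one_iff_existsUnique_adj]
    at hu hv
  obtain ⟨w, -, hw⟩ := Finset.exists_mem_notMem_of_card_lt_card
    ((Finset.card_le_two (a := u) (b := v)).trans_lt hV)
  obtain ⟨p⟩ := hG u w
  obtain ⟨d, -, hfst, hsnd⟩ :=
    p.exists_boundary_dart ({u, v} : Finset V) (Finset.mem_insert_self u {v}) hw
  simp only [Finset.mem_coe, Finset.mem_insert, Finset.mem_singleton, not_or] at hfst hsnd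
  rcases hfst with h | h
  · exact hsnd.2 (hu.unique (h ▸ d.adj) huv)
  · exact hsnd.1 (hv.unique (h ▸ d.adj) huv.symm)

end Leaves

theorem stmt15_general {V : Type*} [Fintype V] {G : SimpleGraph V} (hG : G.Connected)
    {B : Finset V} (hB : B.Nontrivial) (hind : G.IsIndepSet B) {d : ℕ}
    (hd : ∀ x ∈ B, G.degree x ≤ d) :
    steklovEig G B 1 = 0 ∧
    0 < steklovEig G B 2 ∧
    (∀ k : ℕ, 1 ≤ k → k < B.card → steklovEig G B k ≤ steklovEig G B (k + 1)) ∧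
    (∀ k : ℕ, 1 ≤ k → k ≤ B.card → steklovEig G B k ≤ d) :=
  ⟨steklovEig_one hB.nonempty, steklovEig_two_pos hG hB,
    fun k hk hlt => steklovEig_mono hk k.le_succ hlt,
    fun _ hk hle => steklovEig_le_of_degree_le hind hd hk hle⟩

/-- Let `T` be a tree with at least 3 vertices and leaves as boundary `B`.
Then `0 = σ₁(T) < σ₂(T) ≤ ⋯ ≤ σ_{|B|}(T) ≤ 1`; in particular every Steklov eigenvalue of
`T` is at most `1` and the eigenvalue `0` has multiplicity exactly `1`. -/
theorem stmt15 {V : Type*} [Fintype V] [DecidableEq V] (T : SimpleGraph V)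
    (hT : T.IsTree) (hcard : 3 ≤ Fintype.card V) :
    steklovEig T (leavesFinset T) 1 = 0 ∧
    0 < steklovEig T (leavesFinset T) 2 ∧
    (∀ k : ℕ, 1 ≤ k → k < (leavesFinset T).card →
      steklovEig T (leavesFinset T) k ≤ steklovEig T (leavesFinset T) (k + 1)) ∧
    (∀ k : ℕ, 1 ≤ k → k ≤ (leavesFinset T).card → steklovEig T (leavesFinset T) k ≤ 1) := by
  have : Nontrivial V := Fintype.one_lt_card_iff_nontrivial.1 (Nat.lt_of_succ_lt hcard)
  simpa only [Nat.cast_one] using stmt15_general hT.connected (leavesFinset_nontrivial hT)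
    (isIndepSet_leavesFinset hT.connected hcard)
    fun x hx => (mem_leavesFinset.1 hx).le
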